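/- arXiv:1303.3754 — 2 statements merged into one kernel-verified Lean document; each statement's English description precedes it below -/
import Mathlib

section
/- For every t ≥ 1, the infimum over u_1, …, u_t ∈ ℝ^d of Q_t(u_1, …, u_t) equals −e_tᵀ D_t^{-1} e_t + f_t. -/
open Matrix Finset

/-- `Q t u = b ‖u₁‖² + c ∑_{s=1}^{t-1} ‖u_{s+1} − u_s‖² + ∑_{s=1}^{t} (y_s − u_sᵀ x_s)²`. -/
noncomputable def Qfun (d : ℕ) (b c : ℝ) (x : ℕ → Fin d → ℝ) (y : ℕ → ℝ)
    (t : ℕ) (u : ℕ → Fin d → ℝ) : ℝ :=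
  b * (u 1 ⬝ᵥ u 1)
    + c * ∑ s ∈ Finset.range (t - 1), (u (s + 2) - u (s + 1)) ⬝ᵥ (u (s + 2) - u (s + 1))
    + ∑ s ∈ Finset.range t, (y (s + 1) - u (s + 1) ⬝ᵥ x (s + 1)) ^ 2

/-- `P t u = inf over u₁,…,u_{t-1} of Q t (u₁,…,u_{t-1},u)`. -/
noncomputable def Pfun (d : ℕ) (b c : ℝ) (x : ℕ → Fin d → ℝ) (y : ℕ → ℝ)
    (t : ℕ) (u : Fin d → ℝ) : ℝ :=
  ⨅ v : ℕ → Fin d → ℝ, Qfun d b c x y t (Function.update v t u)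

/-- `D₁ = b I + x₁ x₁ᵀ`, `D_t = (D_{t-1}⁻¹ + c⁻¹ I)⁻¹ + x_t x_tᵀ` for `t ≥ 2`
(the value at `0` is irrelevant). -/
noncomputable def Dmat (d : ℕ) (b c : ℝ) (x : ℕ → Fin d → ℝ) :
    ℕ → Matrix (Fin d) (Fin d) ℝ
  | 0 => 1
  | 1 => b • (1 : Matrix (Fin d) (Fin d) ℝ) + vecMulVec (x 1) (x 1)
  | (t + 2) => ((Dmat d b c x (t + 1))⁻¹ + c⁻¹ • 1)⁻¹ + vecMulVec (x (t + 2)) (x (t + 2))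

/-- `e₁ = y₁ x₁`, `e_t = (I + c⁻¹ D_{t-1})⁻¹ e_{t-1} + y_t x_t` for `t ≥ 2`. -/
noncomputable def evec (d : ℕ) (b c : ℝ) (x : ℕ → Fin d → ℝ) (y : ℕ → ℝ) :
    ℕ → Fin d → ℝ
  | 0 => 0
  | 1 => y 1 • x 1
  | (t + 2) => (1 + c⁻¹ • Dmat d b c x (t + 1))⁻¹ *ᵥ evec d b c x y (t + 1)
      + y (t + 2) • x (t + 2)

/-- `f₁ = y₁²`, `f_t = f_{t-1} − e_{t-1}ᵀ (c I + D_{t-1})⁻¹ e_{t-1} + y_t²` for `t ≥ 2`. -/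
noncomputable def fsc (d : ℕ) (b c : ℝ) (x : ℕ → Fin d → ℝ) (y : ℕ → ℝ) : ℕ → ℝ
  | 0 => 0
  | 1 => (y 1) ^ 2
  | (t + 2) => fsc d b c x y (t + 1)
      - evec d b c x y (t + 1) ⬝ᵥ ((c • (1 : Matrix (Fin d) (Fin d) ℝ)
          + Dmat d b c x (t + 1))⁻¹ *ᵥ evec d b c x y (t + 1))
      + (y (t + 2)) ^ 2

/-!
This is dynamic programming in the last vector: let `P_t(u)` be the minimum of `Q_t` over all
sequences ending in `u_t = u`. Then `P_1` is quadratic and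
`P_t(u) = min_w (P_{t-1}(w) + c‖u - w‖²) + (y_t - uᵀx_t)²`. If `P_{t-1}(w) = wᵀDw - 2wᵀe + f` with
`D` positive definite, completing the square in `w` gives the minimum
`f + c‖u‖² - (e + cu)ᵀ(cI + D)⁻¹(e + cu)`, which by the Woodbury identity
`(D⁻¹ + c⁻¹I)⁻¹ = cI - c²(cI + D)⁻¹` is again quadratic in `u`, with the coefficients of the
recursion. Hence `P_t(u) = uᵀD_t u - 2uᵀe_t + f_t`, and completing the square in `u` minimizes it.
-/

theorem isLeast_range_of_isLeast_range_update {ι γ : Type*} [DecidableEq ι] {β : ι → Type*}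
    [Preorder γ] {F : (∀ i, β i) → γ} {s : ι} {g : β s → γ} {m : γ}
    (hg : ∀ w, IsLeast (Set.range fun v ↦ F (Function.update v s w)) (g w))
    (hm : IsLeast (Set.range g) m) : IsLeast (Set.range F) m := by
  refine ⟨?_, ?_⟩
  · obtain ⟨w, rfl⟩ := hm.1
    obtain ⟨v, hv⟩ := (hg w).1
    exact ⟨_, hv⟩
  · rintro _ ⟨v, rfl⟩
    calc m ≤ g (v s) := hm.2 ⟨_, rfl⟩
      _ ≤ F (Function.update v s (v s)) := (hg (v s)).2 ⟨v, rfl⟩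
      _ = F v := by rw [Function.update_eq_self]

theorem isLeast_range_add_const {ι γ : Type*} [Add γ] [Preorder γ] [AddRightMono γ] {F : ι → γ}
    {m : γ} (h : IsLeast (Set.range F) m) (k : γ) :
    IsLeast (Set.range fun i ↦ F i + k) (m + k) := by
  simpa only [← Set.range_comp, Function.comp_def] using add_left_mono.map_isLeast h

section QuadFun

variable {n : Type*} [Fintype n]

/-- The quadratic function `u ↦ uᵀ A u - 2 uᵀ e + f`, in the form in which the partial minima of
`Qfun` propagate. -/
def quadFun {R : Type*} [CommRing R] (A : Matrix n n R) (e : n → R) (f : R) (u : n → R) : R :=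
  u ⬝ᵥ (A *ᵥ u) - 2 * (u ⬝ᵥ e) + f

section CommRing

variable {R : Type*} [CommRing R]

theorem dotProduct_mulVec_comm_of_isSymm {A : Matrix n n R} (hA : A.IsSymm) (u v : n → R) :
    u ⬝ᵥ (A *ᵥ v) = v ⬝ᵥ (A *ᵥ u) := by
  simpa only [hA.eq] using dotProduct_transpose_mulVec A u v

theorem quadFun_add_sq (A : Matrix n n R) (e : n → R) (f : R) (x : n → R) (y : R) (u : n → R) :
    quadFun A e f u + (y - u ⬝ᵥ x) ^ 2 =
      quadFun (A + vecMulVec x x) (e + y • x) (f + y ^ 2) u := by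
  simp only [quadFun, add_mulVec, vecMulVec_mulVec, dotProduct_add, dotProduct_smul,
    MulOpposite.smul_eq_mul_unop, MulOpposite.unop_op, smul_eq_mul, dotProduct_comm x u]
  ring

variable [DecidableEq n]

theorem quadFun_add_dotProduct_sub_self (A : Matrix n n R) (e : n → R) (f c : R) (u w : n → R) :
    quadFun A e f w + c * ((u - w) ⬝ᵥ (u - w)) =
      quadFun (c • 1 + A) (e + c • u) (f + c * (u ⬝ᵥ u)) w := by
  simp only [quadFun, add_mulVec, smul_mulVec, one_mulVec, dotProduct_add, dotProduct_sub,
    sub_dotProduct, dotProduct_smul, smul_eq_mul, dotProduct_comm w u]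
  ring

theorem quadFun_eq_complete_square {A : Matrix n n R} (hA : A.IsSymm) (hu : IsUnit A)
    (e : n → R) (f : R) (u : n → R) :
    quadFun A e f u =
      (u - A⁻¹ *ᵥ e) ⬝ᵥ (A *ᵥ (u - A⁻¹ *ᵥ e)) + (-(e ⬝ᵥ (A⁻¹ *ᵥ e)) + f) := by
  have hdet : IsUnit A.det := (isUnit_iff_isUnit_det A).1 hu
  have hcancel : A *ᵥ (A⁻¹ *ᵥ e) = e := by
    rw [mulVec_mulVec, mul_nonsing_inv _ hdet, one_mulVec]
  have hcross : (A⁻¹ *ᵥ e) ⬝ᵥ (A *ᵥ u) = u ⬝ᵥ e := by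
    rw [dotProduct_mulVec_comm_of_isSymm hA, hcancel]
  rw [quadFun, mulVec_sub, hcancel, sub_dotProduct, dotProduct_sub, dotProduct_sub, hcross,
    dotProduct_comm (A⁻¹ *ᵥ e) e]
  ring

end CommRing

section Field

variable {K : Type*} [Field K] [DecidableEq n] {c : K} {D : Matrix n n K}

theorem inv_one_add_inv_smul (hc : c ≠ 0) (hcD : IsUnit (c • 1 + D)) :
    (1 + c⁻¹ • D)⁻¹ = c • (c • 1 + D)⁻¹ := by
  have hdet : IsUnit (c • 1 + D).det := (isUnit_iff_isUnit_det _).1 hcD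
  have hfactor : 1 + c⁻¹ • D = (Units.mk0 c hc)⁻¹ • (c • 1 + D) := by
    simp [Units.smul_def, smul_smul, hc]
  rw [hfactor, inv_smul' _ _ hdet, inv_inv, Units.smul_mk0]

theorem inv_inv_add_inv_smul_one (hc : c ≠ 0) (hD : IsUnit D) (hcD : IsUnit (c • 1 + D)) :
    (D⁻¹ + c⁻¹ • 1)⁻¹ = c • 1 - c ^ 2 • (c • 1 + D)⁻¹ := by
  have hdet : IsUnit D.det := (isUnit_iff_isUnit_det D).1 hD
  have hscalar : (c⁻¹ • 1 : Matrix n n K)⁻¹ = c • 1 :=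
    inv_eq_left_inv (by simp [smul_smul, hc])
  have hunit : IsUnit (c⁻¹ • 1 : Matrix n n K) :=
    isUnit_one.smul (Units.mk0 c hc)⁻¹
  have hwoodbury := add_mul_mul_inv_eq_sub (c⁻¹ • 1) 1 D⁻¹ 1 hunit
    (isUnit_nonsing_inv_iff.2 hD)
    (by simpa [hscalar, nonsing_inv_nonsing_inv D hdet, add_comm] using hcD)
  simpa [hscalar, nonsing_inv_nonsing_inv D hdet, add_comm, smul_smul, sq] using hwoodbury

theorem neg_dotProduct_inv_mulVec_add_eq_quadFun (hc : c ≠ 0) (hsymm : D.IsSymm) (hD : IsUnit D)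
    (hcD : IsUnit (c • 1 + D)) (e u : n → K) (f : K) :
    -((e + c • u) ⬝ᵥ ((c • 1 + D)⁻¹ *ᵥ (e + c • u))) + (f + c * (u ⬝ᵥ u)) =
      quadFun (D⁻¹ + c⁻¹ • 1)⁻¹ ((1 + c⁻¹ • D)⁻¹ *ᵥ e)
        (f - e ⬝ᵥ ((c • 1 + D)⁻¹ *ᵥ e)) u := by
  have hcross := dotProduct_mulVec_comm_of_isSymm ((isSymm_one.smul c).add hsymm).inv e u
  rw [inv_inv_add_inv_smul_one hc hD hcD, inv_one_add_inv_smul hc hcD]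
  simp only [quadFun, sub_mulVec, smul_mulVec, one_mulVec, mulVec_add, mulVec_smul,
    dotProduct_add, add_dotProduct, dotProduct_sub, dotProduct_smul, smul_dotProduct,
    smul_eq_mul, hcross]
  ring

end Field

section Real

variable [DecidableEq n] {A : Matrix n n ℝ}

theorem isLeast_range_quadFun (hA : A.PosDef) (e : n → ℝ) (f : ℝ) :
    IsLeast (Set.range (quadFun A e f)) (-(e ⬝ᵥ (A⁻¹ *ᵥ e)) + f) := by
  have hsq := quadFun_eq_complete_square (isHermitian_iff_isSymm.1 hA.isHermitian) hA.isUnit e f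
  refine ⟨⟨A⁻¹ *ᵥ e, by simp [hsq]⟩, ?_⟩
  rintro _ ⟨u, rfl⟩
  rw [hsq]
  exact le_add_of_nonneg_left (hA.posSemidef.dotProduct_mulVec_nonneg _)

theorem isLeast_range_quadFun_add_dotProduct_sub_self (hA : A.PosDef) {c : ℝ} (hc : 0 < c)
    (e : n → ℝ) (f : ℝ) (u : n → ℝ) :
    IsLeast (Set.range fun w ↦ quadFun A e f w + c * ((u - w) ⬝ᵥ (u - w)))
      (quadFun (A⁻¹ + c⁻¹ • 1)⁻¹ ((1 + c⁻¹ • A)⁻¹ *ᵥ e)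
        (f - e ⬝ᵥ ((c • 1 + A)⁻¹ *ᵥ e)) u) := by
  have hcA : (c • 1 + A).PosDef := (PosDef.one.smul hc).add hA
  simp only [quadFun_add_dotProduct_sub_self]
  rw [← neg_dotProduct_inv_mulVec_add_eq_quadFun hc.ne'
    (isHermitian_iff_isSymm.1 hA.isHermitian) hA.isUnit hcA.isUnit]
  exact isLeast_range_quadFun hcA _ _

end Real

end QuadFun

section Qfun

variable {d : ℕ} {b c : ℝ}

theorem Dmat_posDef (hb : 0 < b) (hc : 0 < c) (x : ℕ → Fin d → ℝ) :
    ∀ t, (Dmat d b c x t).PosDef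
  | 0 => PosDef.one
  | 1 => (PosDef.one.smul hb).add_posSemidef (posSemidef_vecMulVec_self_star (x 1))
  | t + 2 => ((Dmat_posDef hb hc x (t + 1)).inv.add
      (PosDef.one.smul (inv_pos.2 hc))).inv.add_posSemidef
        (posSemidef_vecMulVec_self_star (x (t + 2)))

theorem Qfun_one (b c : ℝ) (x : ℕ → Fin d → ℝ) (y : ℕ → ℝ) (u : ℕ → Fin d → ℝ) :
    Qfun d b c x y 1 u = quadFun (Dmat d b c x 1) (evec d b c x y 1) (fsc d b c x y 1) (u 1) := by
  have hprior : b * (u 1 ⬝ᵥ u 1) = quadFun (b • 1) 0 0 (u 1) := by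
    simp [quadFun, smul_mulVec]
  simp [Qfun, Dmat, evec, fsc, hprior, quadFun_add_sq]

theorem Qfun_update_of_lt (b c : ℝ) (x : ℕ → Fin d → ℝ) (y : ℕ → ℝ) {t s : ℕ} (ht : 1 ≤ t)
    (hts : t < s) (v : ℕ → Fin d → ℝ) (u : Fin d → ℝ) :
    Qfun d b c x y t (Function.update v s u) = Qfun d b c x y t v := by
  have hupdate : ∀ r ≤ t, Function.update v s u r = v r := fun r hr ↦
    Function.update_of_ne (hr.trans_lt hts).ne _ _
  unfold Qfun
  congr 1
  · rw [hupdate 1 ht]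
    congr 2
    refine Finset.sum_congr rfl fun r hr ↦ ?_
    have := Finset.mem_range.1 hr
    rw [hupdate (r + 1) (by lia), hupdate (r + 2) (by lia)]
  · refine Finset.sum_congr rfl fun r hr ↦ ?_
    rw [hupdate (r + 1) (Finset.mem_range.1 hr)]

theorem Qfun_add_two (b c : ℝ) (x : ℕ → Fin d → ℝ) (y : ℕ → ℝ) (t : ℕ) (u : ℕ → Fin d → ℝ) :
    Qfun d b c x y (t + 2) u = Qfun d b c x y (t + 1) u
      + c * ((u (t + 2) - u (t + 1)) ⬝ᵥ (u (t + 2) - u (t + 1)))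
      + (y (t + 2) - u (t + 2) ⬝ᵥ x (t + 2)) ^ 2 := by
  rw [Qfun, Qfun, Nat.add_succ_sub_one, Nat.add_sub_cancel, Finset.sum_range_succ _ t,
    Finset.sum_range_succ _ (t + 1)]
  ring

theorem Qfun_add_two_update (b c : ℝ) (x : ℕ → Fin d → ℝ) (y : ℕ → ℝ) (t : ℕ)
    (v : ℕ → Fin d → ℝ) (u : Fin d → ℝ) :
    Qfun d b c x y (t + 2) (Function.update v (t + 2) u) = Qfun d b c x y (t + 1) v
      + c * ((u - v (t + 1)) ⬝ᵥ (u - v (t + 1))) + (y (t + 2) - u ⬝ᵥ x (t + 2)) ^ 2 := by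
  rw [Qfun_add_two, Qfun_update_of_lt b c x y (Nat.le_add_left 1 t) (Nat.lt_succ_self (t + 1)),
    Function.update_self, Function.update_of_ne (Nat.succ_ne_self (t + 1)).symm]

theorem isLeast_range_quadFun_add_transition (hb : 0 < b) (hc : 0 < c) (x : ℕ → Fin d → ℝ)
    (y : ℕ → ℝ) (t : ℕ) (u : Fin d → ℝ) :
    IsLeast (Set.range fun w ↦
        quadFun (Dmat d b c x (t + 1)) (evec d b c x y (t + 1)) (fsc d b c x y (t + 1)) w
          + c * ((u - w) ⬝ᵥ (u - w)) + (y (t + 2) - u ⬝ᵥ x (t + 2)) ^ 2)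
      (quadFun (Dmat d b c x (t + 2)) (evec d b c x y (t + 2)) (fsc d b c x y (t + 2)) u) := by
  rw [Dmat, evec, fsc, ← quadFun_add_sq]
  exact isLeast_range_add_const
    (isLeast_range_quadFun_add_dotProduct_sub_self (Dmat_posDef hb hc x (t + 1)) hc _ _ u) _

theorem isLeast_range_Qfun_update (hb : 0 < b) (hc : 0 < c) (x : ℕ → Fin d → ℝ) (y : ℕ → ℝ)
    {t : ℕ} (ht : 1 ≤ t) (u : Fin d → ℝ) :
    IsLeast (Set.range fun v ↦ Qfun d b c x y t (Function.update v t u))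
      (quadFun (Dmat d b c x t) (evec d b c x y t) (fsc d b c x y t) u) := by
  induction t, ht using Nat.le_induction generalizing u with
  | base => simp [Qfun_one]
  | succ t ht ih =>
    obtain ⟨t, rfl⟩ := Nat.exists_eq_add_of_le' ht
    refine isLeast_range_of_isLeast_range_update (s := t + 1) (fun w ↦ ?_)
      (isLeast_range_quadFun_add_transition hb hc x y t u)
    simp only [Qfun_add_two_update, Function.update_self]
    exact isLeast_range_add_const (isLeast_range_add_const (ih w) _) _

end Qfun

theorem laser_inf_Q_general (d : ℕ) (b c : ℝ) (hb : 0 < b) (hc : 0 < c) (x : ℕ → Fin d → ℝ)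
    (y : ℕ → ℝ) (t : ℕ) (ht : 1 ≤ t) :
    IsLeast (Set.range (Qfun d b c x y t))
      (-(evec d b c x y t ⬝ᵥ ((Dmat d b c x t)⁻¹ *ᵥ evec d b c x y t)) + fsc d b c x y t) :=
  isLeast_range_of_isLeast_range_update (isLeast_range_Qfun_update hb hc x y ht)
    (isLeast_range_quadFun (Dmat_posDef hb hc x t) _ _)

theorem laser_inf_Q (d : ℕ) (hd : 1 ≤ d) (b c : ℝ) (hb : 0 < b) (hbc : b < c)
    (x : ℕ → Fin d → ℝ) (y : ℕ → ℝ) :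
    ∀ t : ℕ, 1 ≤ t →
      (⨅ u : ℕ → Fin d → ℝ, Qfun d b c x y t u) =
        -(evec d b c x y t ⬝ᵥ ((Dmat d b c x t)⁻¹ *ᵥ evec d b c x y t))
          + fsc d b c x y t :=
  fun t ht ↦ (laser_inf_Q_general d b c hb (hb.trans hbc) x y t ht).csInf_eq
end

section
/- Assume ‖x_t‖² ≤ X² for all t, for some X > 0. Then for every t ≥ 1, every eigenvalue of D_t is at most max{ (3X² + √(X⁴ + 4X²c))/2, b + X² }; equivalently, D_t ⪯ max{ (3X² + √(X⁴ + 4X²c))/2, b + X² }·I in the positive semidefinite (Loewner) order. -/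
open Matrix

/-!
The largest eigenvalue obeys a scalar recursion. Inversion is antitone on positive definite
matrices, so `D ⪯ M I` gives `(D⁻¹ + c⁻¹ I)⁻¹ ⪯ (M⁻¹ + c⁻¹)⁻¹ I`, while `x xᵀ ⪯ ‖x‖² I` by
Cauchy–Schwarz. Hence `D_t ⪯ M I` propagates as soon as `(M⁻¹ + c⁻¹)⁻¹ + X² ≤ M`, that is
`X² (M + c) ≤ M²`, which holds beyond the positive root `(X² + √(X⁴ + 4X²c)) / 2` of the
corresponding quadratic.
-/

open scoped MatrixOrder ComplexOrder

section Loewner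

variable {n 𝕜 : Type*} [RCLike 𝕜] {A B C : Matrix n n 𝕜}

theorem posDef_of_posDef_of_le (hA : A.PosDef) (hAB : A ≤ B) : B.PosDef :=
  add_sub_cancel A B ▸ hA.add_posSemidef (le_iff.mp hAB)

variable [Fintype n] [DecidableEq n]

-- Both differences are Schur complements of the block matrix `[A⁻¹, 1; 1, B]`.
theorem inv_le_inv_of_posDef (hA : A.PosDef) (hAB : A ≤ B) : B⁻¹ ≤ A⁻¹ := by
  have hB : B.PosDef := posDef_of_posDef_of_le hA hAB
  have hA_inv : A⁻¹⁻¹ = A := nonsing_inv_nonsing_inv A ((isUnit_iff_isUnit_det A).mp hA.isUnit)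
  have := hA.isUnit.invertible
  have := hB.isUnit.invertible
  have hblock : (fromBlocks A⁻¹ 1 1ᴴ B).PosSemidef := by
    rw [PosDef.fromBlocks₁₁ _ _ hA.inv]
    simpa [hA_inv] using le_iff.mp hAB
  rw [PosDef.fromBlocks₂₂ _ _ hB] at hblock
  simpa [le_iff] using hblock

theorem inv_inv_add_le_inv_inv_add (hA : A.PosDef) (hC : C.PosSemidef) (hAB : A ≤ B) :
    (A⁻¹ + C)⁻¹ ≤ (B⁻¹ + C)⁻¹ :=
  have hB : B.PosDef := posDef_of_posDef_of_le hA hAB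
  inv_le_inv_of_posDef (hB.inv.add_posSemidef hC)
    (add_le_add_left (inv_le_inv_of_posDef hA hAB) C)

end Loewner

section Scalar

variable {n : Type*} [DecidableEq n]

theorem smul_one_le_smul_one {r s : ℝ} (hrs : r ≤ s) : r • (1 : Matrix n n ℝ) ≤ s • 1 := by
  rw [le_iff, ← sub_smul]
  exact PosSemidef.one.smul (sub_nonneg.mpr hrs)

variable [Fintype n]

theorem inv_smul_one {K : Type*} [Field K] {k : K} (hk : k ≠ 0) :
    (k • (1 : Matrix n n K))⁻¹ = k⁻¹ • 1 :=
  inv_eq_right_inv (by simp [smul_smul, hk])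

theorem vecMulVec_self_le_smul_one {y : n → ℝ} {r : ℝ} (hy : y ⬝ᵥ y ≤ r) :
    vecMulVec y y ≤ r • 1 := by
  have hherm : (r • (1 : Matrix n n ℝ) - vecMulVec y y).IsHermitian :=
    (isHermitian_one.smul (.all r)).sub (posSemidef_vecMulVec_self_star y).isHermitian
  refine PosSemidef.of_dotProduct_mulVec_nonneg hherm fun v ↦ ?_
  have hcauchy : (y ⬝ᵥ v) ^ 2 ≤ (y ⬝ᵥ y) * (v ⬝ᵥ v) := by
    simpa only [dotProduct, ← sq] using Finset.sum_mul_sq_le_sq_mul_sq Finset.univ y v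
  have hform : star v ⬝ᵥ ((r • (1 : Matrix n n ℝ) - vecMulVec y y) *ᵥ v) =
      r * (v ⬝ᵥ v) - (y ⬝ᵥ v) ^ 2 := by
    simp [sub_mulVec, smul_mulVec, vecMulVec_mulVec, dotProduct_sub, sq, dotProduct_comm v y]
  rw [hform, sub_nonneg]
  exact hcauchy.trans (mul_le_mul_of_nonneg_right hy (dotProduct_self_star_nonneg v))

theorem inv_inv_add_smul_one_le {A : Matrix n n ℝ} (hA : A.PosDef) {M k : ℝ} (hM : 0 < M)
    (hk : 0 ≤ k) (hAM : A ≤ M • 1) : (A⁻¹ + k • 1)⁻¹ ≤ (M⁻¹ + k)⁻¹ • 1 :=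
  calc (A⁻¹ + k • 1)⁻¹ ≤ ((M • 1)⁻¹ + k • 1)⁻¹ :=
        inv_inv_add_le_inv_inv_add hA (PosSemidef.one.smul hk) hAM
    _ = (M⁻¹ + k)⁻¹ • 1 := by
      rw [inv_smul_one hM.ne', ← add_smul, inv_smul_one (by positivity)]

end Scalar

theorem mul_add_le_sq_of_root_le {Y c M : ℝ}
    (hM : (Y + √(Y ^ 2 + 4 * Y * c)) / 2 ≤ M) : Y * (M + c) ≤ M ^ 2 := by
  have hsqrt : √(Y ^ 2 + 4 * Y * c) ≤ 2 * M - Y := by linarith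
  have hsq : Y ^ 2 + 4 * Y * c ≤ (2 * M - Y) ^ 2 := Real.sqrt_le_iff.mp hsqrt |>.2
  linarith

theorem inv_inv_add_inv_add_le {Y c M : ℝ} (hc : 0 < c) (hM : 0 < M)
    (h : Y * (M + c) ≤ M ^ 2) : (M⁻¹ + c⁻¹)⁻¹ + Y ≤ M := by
  have hharm : (M⁻¹ + c⁻¹)⁻¹ = M - M ^ 2 / (M + c) := by field_simp; ring
  have hY : Y ≤ M ^ 2 / (M + c) := (le_div_iff₀ (by positivity)).mpr h
  linarith

section Recursion

variable {d : ℕ} {b c : ℝ} {x : ℕ → Fin d → ℝ}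

theorem Dmat_succ_posDef (hb : 0 < b) (hc : 0 < c) (t : ℕ) : (Dmat d b c x (t + 1)).PosDef := by
  induction t with
  | zero => exact (PosDef.one.smul hb).add_posSemidef (posSemidef_vecMulVec_self_star (x 1))
  | succ t ih =>
    exact (ih.inv.add (PosDef.one.smul (inv_pos.mpr hc))).inv.add_posSemidef
      (posSemidef_vecMulVec_self_star (x (t + 2)))

theorem Dmat_succ_le_smul_one (hb : 0 < b) (hc : 0 < c) {Y M : ℝ}
    (hx : ∀ t, x (t + 1) ⬝ᵥ x (t + 1) ≤ Y) (hM : 0 < M) (hinit : b + Y ≤ M)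
    (hstep : (M⁻¹ + c⁻¹)⁻¹ + Y ≤ M) (t : ℕ) : Dmat d b c x (t + 1) ≤ M • 1 := by
  induction t with
  | zero =>
    calc Dmat d b c x 1 = b • 1 + vecMulVec (x 1) (x 1) := rfl
      _ ≤ b • 1 + Y • 1 := by grw [vecMulVec_self_le_smul_one (hx 0)]
      _ = (b + Y) • 1 := (add_smul b Y 1).symm
      _ ≤ M • 1 := smul_one_le_smul_one hinit
  | succ t ih =>
    calc Dmat d b c x (t + 2)
        = ((Dmat d b c x (t + 1))⁻¹ + c⁻¹ • 1)⁻¹ + vecMulVec (x (t + 2)) (x (t + 2)) := rfl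
      _ ≤ (M⁻¹ + c⁻¹)⁻¹ • 1 + Y • 1 :=
        add_le_add (inv_inv_add_smul_one_le (Dmat_succ_posDef hb hc t) hM (inv_pos.mpr hc).le ih)
          (vecMulVec_self_le_smul_one (hx (t + 1)))
      _ = ((M⁻¹ + c⁻¹)⁻¹ + Y) • 1 := (add_smul _ Y 1).symm
      _ ≤ M • 1 := smul_one_le_smul_one hstep

end Recursion

theorem laser_eigenvalue_bound_general {d : ℕ} {b c : ℝ} (hb : 0 < b) (hc : 0 < c)
    {x : ℕ → Fin d → ℝ} {X : ℝ} (hx : ∀ t : ℕ, x (t + 1) ⬝ᵥ x (t + 1) ≤ X ^ 2)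
    {t : ℕ} (ht : 1 ≤ t) :
    Dmat d b c x t ≤ max ((X ^ 2 + √(X ^ 4 + 4 * X ^ 2 * c)) / 2) (b + X ^ 2) • 1 := by
  set M := max ((X ^ 2 + √(X ^ 4 + 4 * X ^ 2 * c)) / 2) (b + X ^ 2)
  have hinit : b + X ^ 2 ≤ M := le_max_right _ _
  have hM : 0 < M := lt_of_lt_of_le (by positivity) hinit
  have hroot : (X ^ 2 + √((X ^ 2) ^ 2 + 4 * X ^ 2 * c)) / 2 ≤ M := by
    rw [← pow_mul]
    exact le_max_left _ _
  have hstep : (M⁻¹ + c⁻¹)⁻¹ + X ^ 2 ≤ M :=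
    inv_inv_add_inv_add_le hc hM (mul_add_le_sq_of_root_le hroot)
  obtain ⟨t, rfl⟩ := Nat.exists_eq_add_of_le' ht
  exact Dmat_succ_le_smul_one hb hc hx hM hinit hstep t

theorem laser_eigenvalue_bound (d : ℕ) (hd : 1 ≤ d) (b c : ℝ)
    (hb : 0 < b) (hbc : b < c) (x : ℕ → Fin d → ℝ)
    (X : ℝ) (hX : 0 < X) (hx : ∀ t : ℕ, x (t + 1) ⬝ᵥ x (t + 1) ≤ X ^ 2) :
    ∀ t : ℕ, 1 ≤ t →
      (max ((3 * X ^ 2 + Real.sqrt (X ^ 4 + 4 * X ^ 2 * c)) / 2) (b + X ^ 2) •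
          (1 : Matrix (Fin d) (Fin d) ℝ) - Dmat d b c x t).PosSemidef :=
  fun t ht ↦ (laser_eigenvalue_bound_general hb (hb.trans hbc) hx ht).trans
    (smul_one_le_smul_one (max_le_max_right _ (by linarith [sq_nonneg X])))
end
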